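/- arXiv:1804.02342 — 2 statements merged into one kernel-verified Lean document; each statement's English description precedes it below -/
import Mathlib

section
/- For every k > 0 and every nonzero r ∈ ℝ², the 2×2 matrix-valued circle integral satisfies ∫₀^{2π} d(θ) ⊗ d(θ) · exp(i k r·d(θ)) dθ = 2π [ (J₁(k|r|)/(k|r|)) I + (J₀(k|r|) − 2 J₁(k|r|)/(k|r|)) r̂ ⊗ r̂ ], where d(θ) = (cos θ, sin θ), r̂ = r/|r|, I is the 2×2 identity matrix, and a ⊗ b denotes the matrix (aᵢ bⱼ). -/
/-- Bessel function of the first kind of order zero, defined by its power series. -/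
noncomputable def J0 (t : ℝ) : ℝ :=
  ∑' p : ℕ, (-1 : ℝ) ^ p / ((Nat.factorial p : ℝ) ^ 2) * (t / 2) ^ (2 * p)

/-- Bessel function of the first kind of order one, defined by its power series. -/
noncomputable def J1 (t : ℝ) : ℝ :=
  ∑' p : ℕ, (-1 : ℝ) ^ p / ((Nat.factorial p : ℝ) * (Nat.factorial (p + 1) : ℝ)) *
    (t / 2) ^ (2 * p + 1)

/-- The unit direction `d(θ) = (cos θ, sin θ)` as a vector in `ℝ²`. -/
noncomputable def dir (θ : ℝ) : Fin 2 → ℝ := ![Real.cos θ, Real.sin θ]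

/-- Euclidean norm of a vector in `ℝ²`. -/
noncomputable def nrm (r : Fin 2 → ℝ) : ℝ := Real.sqrt (r 0 ^ 2 + r 1 ^ 2)

open MeasureTheory

/-- Moments of the cosine over one period. -/
noncomputable def cosMom (n : ℕ) : ℝ := ∫ θ in (0:ℝ)..(2 * Real.pi), Real.cos θ ^ n

lemma cosMom_rec (n : ℕ) : cosMom (n + 2) = (n + 1) / (n + 2) * cosMom n := by
  unfold cosMom
  rw [integral_cos_pow]
  simp

lemma cosMom_odd (p : ℕ) : cosMom (2 * p + 1) = 0 := by
  induction p with
  | zero => simp [cosMom]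
  | succ p ih =>
    rw [show 2 * (p + 1) + 1 = (2 * p + 1) + 2 by ring, cosMom_rec, ih, mul_zero]

lemma cosMom_even (p : ℕ) : cosMom (2 * p) =
    2 * Real.pi * ((2 * p).factorial / (4 ^ p * (p.factorial : ℝ) ^ 2)) := by
  induction p with
  | zero => simp [cosMom]
  | succ p ih =>
    rw [show 2 * (p + 1) = (2 * p) + 2 by ring, cosMom_rec, ih]
    have h1 : (p.factorial : ℝ) ≠ 0 := by exact_mod_cast p.factorial_ne_zero
    have h2 : (p : ℝ) + 1 ≠ 0 := by positivity
    rw [Nat.factorial_succ (2 * p + 1), Nat.factorial_succ (2 * p), Nat.factorial_succ p]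
    push_cast
    field_simp
    ring

lemma hasSum_circle (t : ℝ) (g : ℝ → ℝ) (hg : Continuous g) (hb : ∀ θ, |g θ| ≤ 1) :
    HasSum (fun n : ℕ => (Complex.I * t) ^ n / (n.factorial : ℂ) *
        ((∫ θ in (0:ℝ)..(2 * Real.pi), g θ * Real.cos θ ^ n : ℝ) : ℂ))
      (∫ θ in (0:ℝ)..(2 * Real.pi), (g θ : ℂ) * Complex.exp (Complex.I * ((t * Real.cos θ : ℝ) : ℂ))) := by
  have key := intervalIntegral.hasSum_integral_of_dominated_convergence
    (μ := volume) (a := (0:ℝ)) (b := 2 * Real.pi)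
    (F := fun (n : ℕ) (θ : ℝ) => (Complex.I * t) ^ n / (n.factorial : ℂ) *
        ((g θ * Real.cos θ ^ n : ℝ) : ℂ))
    (f := fun θ => (g θ : ℂ) * Complex.exp (Complex.I * ((t * Real.cos θ : ℝ) : ℂ)))
    (bound := fun n _ => |t| ^ n / n.factorial) ?_ ?_ ?_ ?_ ?_
  · simp only [intervalIntegral.integral_const_mul, intervalIntegral.integral_ofReal] at key
    exact key
  · intro n
    refine Continuous.aestronglyMeasurable ?_
    fun_prop
  · intro n
    refine Filter.Eventually.of_forall fun θ _ => ?_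
    rw [norm_mul, norm_div, norm_pow, norm_mul, Complex.norm_I, one_mul, Complex.norm_real,
      Complex.norm_natCast, Complex.norm_real, Real.norm_eq_abs, Real.norm_eq_abs, abs_mul, abs_pow]
    have h1 : |Real.cos θ| ^ n ≤ 1 := pow_le_one₀ (abs_nonneg _) (Real.abs_cos_le_one θ)
    have h2 : |g θ| * |Real.cos θ| ^ n ≤ 1 := mul_le_one₀ (hb θ) (by positivity) h1
    exact mul_le_of_le_one_right (by positivity) h2
  · exact Filter.Eventually.of_forall fun θ _ => Real.summable_pow_div_factorial |t|
  · exact intervalIntegrable_const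
  · refine Filter.Eventually.of_forall fun θ _ => ?_
    have h := (NormedSpace.expSeries_div_hasSum_exp (𝔸 := ℂ)
      (Complex.I * ((t * Real.cos θ : ℝ) : ℂ))).mul_left (g θ : ℂ)
    rw [← Complex.exp_eq_exp_ℂ] at h
    refine Eq.mp (congrArg (fun u : ℕ → ℂ => HasSum u _) (funext fun n => ?_)) h
    push_cast
    rw [← mul_assoc Complex.I, mul_pow (Complex.I * (t : ℂ))]
    ring

/-- Passing to the even terms. -/
lemma circle_even (t : ℝ) (g : ℝ → ℝ) (hg : Continuous g) (hb : ∀ θ, |g θ| ≤ 1)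
    (c : ℕ → ℝ) (h0 : ∀ p, (∫ θ in (0:ℝ)..(2 * Real.pi), g θ * Real.cos θ ^ (2 * p + 1)) = 0)
    (hc : ∀ p, (∫ θ in (0:ℝ)..(2 * Real.pi), g θ * Real.cos θ ^ (2 * p)) = c p) :
    (∫ θ in (0:ℝ)..(2 * Real.pi), (g θ : ℂ) * Complex.exp (Complex.I * ((t * Real.cos θ : ℝ) : ℂ)))
      = ((∑' p : ℕ, (-1) ^ p * t ^ (2 * p) / (2 * p).factorial * c p : ℝ) : ℂ) := by
  have h := hasSum_circle t g hg hb
  have hinj : Function.Injective (fun p : ℕ => 2 * p) := fun a b hab => by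
    simpa using hab
  rw [← hinj.hasSum_iff] at h
  · rw [Complex.ofReal_tsum, ← h.tsum_eq]
    refine tsum_congr fun p => ?_
    simp only [Function.comp]
    rw [hc, mul_pow, pow_mul Complex.I, Complex.I_sq]
    push_cast
    rfl
  · intro n hn
    rcases Nat.even_or_odd' n with ⟨p, rfl | rfl⟩
    · exact absurd ⟨p, rfl⟩ hn
    · rw [h0]; simp

lemma circle_J0 (t : ℝ) :
    (∫ θ in (0:ℝ)..(2 * Real.pi), Complex.exp (Complex.I * ((t * Real.cos θ : ℝ) : ℂ)))
      = ((2 * Real.pi * J0 t : ℝ) : ℂ) := by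
  have h := circle_even t (fun _ => 1) continuous_const (by simp) (fun p => cosMom (2 * p))
    (fun p => by simpa [cosMom] using cosMom_odd p) (fun p => by simp [cosMom])
  simp only [Complex.ofReal_one, one_mul] at h
  rw [h, J0, ← tsum_mul_left]
  congr 1
  refine tsum_congr fun p => ?_
  rw [cosMom_even]
  have h1 : (p.factorial : ℝ) ≠ 0 := by exact_mod_cast p.factorial_ne_zero
  have h2 : ((2 * p).factorial : ℝ) ≠ 0 := by exact_mod_cast (2 * p).factorial_ne_zero
  rw [div_pow, pow_mul 2 2 p, show (2:ℝ) ^ 2 = 4 by norm_num]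
  field_simp

lemma sinMom (n : ℕ) : (∫ θ in (0:ℝ)..(2 * Real.pi), Real.sin θ ^ 2 * Real.cos θ ^ n) =
    cosMom n / (n + 2) := by
  have : ∀ θ : ℝ, Real.sin θ ^ 2 * Real.cos θ ^ n = Real.cos θ ^ n - Real.cos θ ^ (n + 2) := by
    intro θ; rw [Real.sin_sq]; ring
  simp only [this]
  rw [intervalIntegral.integral_sub (Continuous.intervalIntegrable (by fun_prop) _ _)
    (Continuous.intervalIntegrable (by fun_prop) _ _)]
  change cosMom n - cosMom (n + 2) = _
  rw [cosMom_rec]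
  field_simp
  ring

lemma circle_J1 (t : ℝ) (ht : t ≠ 0) :
    (∫ θ in (0:ℝ)..(2 * Real.pi), ((Real.sin θ ^ 2 : ℝ) : ℂ) *
      Complex.exp (Complex.I * ((t * Real.cos θ : ℝ) : ℂ)))
      = ((2 * Real.pi * (J1 t / t) : ℝ) : ℂ) := by
  have h := circle_even t (fun θ => Real.sin θ ^ 2) (by fun_prop)
    (fun θ => by rw [abs_of_nonneg (sq_nonneg _)]; exact Real.sin_sq_le_one θ)
    (fun p => cosMom (2 * p) / ((2 * p : ℕ) + 2))
    (fun p => by rw [sinMom, cosMom_odd]; simp) (fun p => sinMom _)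
  rw [h, J1, ← tsum_div_const, ← tsum_mul_left]
  congr 1
  refine tsum_congr fun p => ?_
  rw [cosMom_even]
  have h1 : (p.factorial : ℝ) ≠ 0 := by exact_mod_cast p.factorial_ne_zero
  have h2 : ((2 * p).factorial : ℝ) ≠ 0 := by exact_mod_cast (2 * p).factorial_ne_zero
  have h3 : (p : ℝ) + 1 ≠ 0 := by positivity
  rw [pow_succ (t / 2), div_pow, pow_mul 2 2 p, show (2:ℝ) ^ 2 = 4 by norm_num, Nat.factorial_succ]
  push_cast
  field_simp

lemma circle_cross (t : ℝ) :
    (∫ θ in (0:ℝ)..(2 * Real.pi), ((Real.sin θ * Real.cos θ : ℝ) : ℂ) *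
      Complex.exp (Complex.I * ((t * Real.cos θ : ℝ) : ℂ))) = 0 := by
  have h := intervalIntegral.integral_comp_sub_left (a := 0) (b := 2 * Real.pi)
    (fun θ : ℝ => ((Real.sin θ * Real.cos θ : ℝ) : ℂ) *
      Complex.exp (Complex.I * ((t * Real.cos θ : ℝ) : ℂ))) (2 * Real.pi)
  simp only [Real.sin_two_pi_sub, Real.cos_two_pi_sub, sub_self, sub_zero, neg_mul,
    Complex.ofReal_neg, intervalIntegral.integral_neg] at h
  exact self_eq_neg.mp h.symm

/-- General second moment in the rotated frame. -/
lemma circle_rot (t : ℝ) (ht : t ≠ 0) (φ a b c d : ℝ) (f g : ℝ → ℝ)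
    (hf : ∀ θ, f (θ + φ) = a * Real.cos θ + b * Real.sin θ)
    (hg : ∀ θ, g (θ + φ) = c * Real.cos θ + d * Real.sin θ)
    (hfp : Function.Periodic f (2 * Real.pi)) (hgp : Function.Periodic g (2 * Real.pi)) :
    (∫ θ in (0:ℝ)..(2 * Real.pi), ((f θ * g θ : ℝ) : ℂ) *
      Complex.exp (Complex.I * ((t * Real.cos (θ - φ) : ℝ) : ℂ))) =
    ((2 * Real.pi * (a * c * (J0 t - J1 t / t) + b * d * (J1 t / t)) : ℝ) : ℂ) := by
  set F : ℝ → ℂ := fun θ => ((f θ * g θ : ℝ) : ℂ) *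
      Complex.exp (Complex.I * ((t * Real.cos (θ - φ) : ℝ) : ℂ)) with hF
  have hper : Function.Periodic F (2 * Real.pi) := by
    intro θ
    simp only [hF]
    rw [hfp, hgp, show θ + 2 * Real.pi - φ = (θ - φ) + 2 * Real.pi by ring, Real.cos_add_two_pi]
  have h1 : (∫ θ in (0:ℝ)..(2 * Real.pi), F θ) = ∫ θ in (0:ℝ)..(2 * Real.pi), F (θ + φ) := by
    rw [intervalIntegral.integral_comp_add_right F φ]
    have := hper.intervalIntegral_add_eq 0 φ
    rw [zero_add] at this
    rw [this, zero_add, add_comm φ]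
  rw [h1]
  have h2 : ∀ θ, F (θ + φ) =
      (a * c : ℂ) * Complex.exp (Complex.I * ((t * Real.cos θ : ℝ) : ℂ)) +
      (b * d - a * c : ℂ) * (((Real.sin θ ^ 2 : ℝ) : ℂ) *
        Complex.exp (Complex.I * ((t * Real.cos θ : ℝ) : ℂ))) +
      (a * d + b * c : ℂ) * (((Real.sin θ * Real.cos θ : ℝ) : ℂ) *
        Complex.exp (Complex.I * ((t * Real.cos θ : ℝ) : ℂ))) := by
    intro θ
    simp only [hF]
    rw [hf, hg, add_sub_cancel_right]
    have e : (a * Real.cos θ + b * Real.sin θ) * (c * Real.cos θ + d * Real.sin θ) =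
      a * c + (b * d - a * c) * Real.sin θ ^ 2 + (a * d + b * c) * (Real.sin θ * Real.cos θ) := by
      linear_combination (a * c) * Real.sin_sq_add_cos_sq θ
    rw [e]
    push_cast
    ring
  simp only [h2]
  rw [intervalIntegral.integral_add (Continuous.intervalIntegrable (by fun_prop) _ _)
    (Continuous.intervalIntegrable (by fun_prop) _ _),
    intervalIntegral.integral_add (Continuous.intervalIntegrable (by fun_prop) _ _)
    (Continuous.intervalIntegrable (by fun_prop) _ _),
    intervalIntegral.integral_const_mul, intervalIntegral.integral_const_mul,
    intervalIntegral.integral_const_mul, circle_J0, circle_J1 t ht, circle_cross]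
  push_cast
  ring

/-- The second-moment circle integral: for every `k > 0` and nonzero `r ∈ ℝ²`,
`∫₀^{2π} d(θ) ⊗ d(θ) exp (i k r · d(θ)) dθ
  = 2π [ (J₁(k|r|)/(k|r|)) I + (J₀(k|r|) - 2 J₁(k|r|)/(k|r|)) r̂ ⊗ r̂ ]`,
stated entrywise for the 2×2 matrices. -/
theorem second_moment_circle_integral (k : ℝ) (hk : 0 < k) (r : Fin 2 → ℝ) (hr : r ≠ 0) :
    ∀ i j : Fin 2,
      (∫ θ in (0:ℝ)..(2 * Real.pi),
          ((dir θ i * dir θ j : ℝ) : ℂ) *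
            Complex.exp (Complex.I *
              ((k * (r 0 * Real.cos θ + r 1 * Real.sin θ) : ℝ) : ℂ))) =
      2 * (Real.pi : ℂ) *
        ((J1 (k * nrm r) / (k * nrm r) * (if i = j then 1 else 0) +
          (J0 (k * nrm r) - 2 * J1 (k * nrm r) / (k * nrm r)) *
            (r i / nrm r) * (r j / nrm r) : ℝ) : ℂ) := by
  have hn : 0 < nrm r := by
    refine Real.sqrt_pos.mpr ?_
    by_contra hcon
    apply hr
    have h0 : r 0 = 0 := by nlinarith [sq_nonneg (r 0), sq_nonneg (r 1)]
    have h1 : r 1 = 0 := by nlinarith [sq_nonneg (r 0), sq_nonneg (r 1)]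
    ext i
    fin_cases i
    · exact h0
    · exact h1
  obtain ⟨φ, h0, h1⟩ : ∃ φ : ℝ, r 0 = nrm r * Real.cos φ ∧ r 1 = nrm r * Real.sin φ := by
    have hz : ‖(⟨r 0, r 1⟩ : ℂ)‖ = nrm r := by
      rw [Complex.norm_eq_sqrt_sq_add_sq, nrm]
    refine ⟨Complex.arg ⟨r 0, r 1⟩, ?_, ?_⟩
    · rw [← hz, Complex.norm_mul_cos_arg]
    · rw [← hz, Complex.norm_mul_sin_arg]
  have ht : k * nrm r ≠ 0 := (mul_pos hk hn).ne'
  have hq0 : r 0 / nrm r = Real.cos φ := by rw [h0]; field_simp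
  have hq1 : r 1 / nrm r = Real.sin φ := by rw [h1]; field_simp
  have hexp : ∀ θ : ℝ, k * (r 0 * Real.cos θ + r 1 * Real.sin θ) =
      (k * nrm r) * Real.cos (θ - φ) := by
    intro θ
    rw [Real.cos_sub]
    linear_combination (k * Real.cos θ) * h0 + (k * Real.sin θ) * h1
  simp only [hexp]
  generalize k * nrm r = t at ht ⊢
  have hc0 : ∀ θ, dir (θ + φ) 0 = Real.cos φ * Real.cos θ + (-Real.sin φ) * Real.sin θ := by
    intro θ
    simp only [dir, Matrix.cons_val_zero, Real.cos_add]
    ring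
  have hc1 : ∀ θ, dir (θ + φ) 1 = Real.sin φ * Real.cos θ + Real.cos φ * Real.sin θ := by
    intro θ
    simp only [dir, Matrix.cons_val_one, Matrix.cons_val_fin_one, Real.sin_add]
    ring
  have hp : ∀ i, Function.Periodic (fun θ => dir θ i) (2 * Real.pi) := by
    intro i θ
    simp [dir]
  have hs := Real.sin_sq_add_cos_sq φ
  intro i j
  fin_cases i <;> fin_cases j <;>
    simp only [Fin.zero_eta, Fin.mk_one, hq0, hq1]
  · rw [circle_rot t ht φ _ _ _ _ (fun θ => dir θ 0) (fun θ => dir θ 0) hc0 hc0 (hp 0) (hp 0)]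
    rw [show (2 * (Real.pi : ℂ)) = ((2 * Real.pi : ℝ) : ℂ) by push_cast; rfl, ← Complex.ofReal_mul]
    congr 1
    simp only [if_true]
    linear_combination (2 * Real.pi * (J1 t / t)) * hs
  · rw [circle_rot t ht φ _ _ _ _ (fun θ => dir θ 0) (fun θ => dir θ 1) hc0 hc1 (hp 0) (hp 1)]
    rw [show (2 * (Real.pi : ℂ)) = ((2 * Real.pi : ℝ) : ℂ) by push_cast; rfl, ← Complex.ofReal_mul]
    congr 1
    simp only [zero_ne_one, if_false]
    ring
  · rw [circle_rot t ht φ _ _ _ _ (fun θ => dir θ 1) (fun θ => dir θ 0) hc1 hc0 (hp 1) (hp 0)]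
    rw [show (2 * (Real.pi : ℂ)) = ((2 * Real.pi : ℝ) : ℂ) by push_cast; rfl, ← Complex.ofReal_mul]
    congr 1
    simp only [one_ne_zero, if_false]
    ring
  · rw [circle_rot t ht φ _ _ _ _ (fun θ => dir θ 1) (fun θ => dir θ 1) hc1 hc1 (hp 1) (hp 1)]
    rw [show (2 * (Real.pi : ℂ)) = ((2 * Real.pi : ℝ) : ℂ) by push_cast; rfl, ← Complex.ofReal_mul]
    congr 1
    simp only [if_true]
    linear_combination (2 * Real.pi * (J1 t / t)) * hs
end

section
/- Let ω > 0, μ > 0 and λ ∈ ℝ with λ + μ ≥ 0, and set k_p = ω/√(λ+2μ) and k_s = ω/√μ. Then for every nonzero r ∈ ℝ² one has the 2×2 matrix identity (1/(8π)) [ (1/(λ+2μ)) ∫₀^{2π} d(θ)⊗d(θ) e^{i k_p r·d(θ)} dθ + (1/μ) ∫₀^{2π} (I − d(θ)⊗d(θ)) e^{i k_s r·d(θ)} dθ ] = (1/(4μ)) [ F₁(|r|) I + F₂(|r|) r̂⊗r̂ ], where d(θ) = (cos θ, sin θ), r̂ = r/|r|, F₁(t) = J₀(k_s t) − (1/(k_s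 t))(J₁(k_s t) − (k_p/k_s) J₁(k_p t)) and F₂(t) = (2/(k_s t)) J₁(k_s t) − J₀(k_s t) − (2 k_p/(k_s² t)) J₁(k_p t) + (k_p²/k_s²) J₀(k_p t). -/
/-- The coefficient `F₁` in the closed-form expression of `Im Π`. -/
noncomputable def F1 (kp ks t : ℝ) : ℝ :=
  J0 (ks * t) - (1 / (ks * t)) * (J1 (ks * t) - (kp / ks) * J1 (kp * t))

/-- The coefficient `F₂` in the closed-form expression of `Im Π`. -/
noncomputable def F2 (kp ks t : ℝ) : ℝ :=
  (2 / (ks * t)) * J1 (ks * t) - J0 (ks * t) - (2 * kp / (ks ^ 2 * t)) * J1 (kp * t) +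
    (kp ^ 2 / ks ^ 2) * J0 (kp * t)

open MeasureTheory intervalIntegral in
lemma aux_hasSum (g : ℝ → ℝ) (hg : Continuous g) (x : ℝ) :
    HasSum (fun n : ℕ => (Complex.I * x) ^ n / (n.factorial : ℂ) *
        ((∫ θ in (0:ℝ)..(2 * Real.pi), g θ * Real.cos θ ^ n : ℝ) : ℂ))
      (∫ θ in (0:ℝ)..(2 * Real.pi),
        (g θ : ℂ) * Complex.exp (Complex.I * ((x * Real.cos θ : ℝ) : ℂ))) := by
  have key := intervalIntegral.hasSum_integral_of_dominated_convergence
    (μ := volume) (a := 0) (b := 2 * Real.pi)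
    (F := fun (n : ℕ) (θ : ℝ) => (Complex.I * x) ^ n / (n.factorial : ℂ) *
      ((g θ * Real.cos θ ^ n : ℝ) : ℂ))
    (f := fun θ : ℝ => (g θ : ℂ) * Complex.exp (Complex.I * ((x * Real.cos θ : ℝ) : ℂ)))
    (bound := fun n θ => |g θ| * (|x| ^ n / (n.factorial : ℝ))) ?_ ?_ ?_ ?_ ?_
  · simpa only [intervalIntegral.integral_const_mul, intervalIntegral.integral_ofReal] using key
  · intro n
    apply Continuous.aestronglyMeasurable
    fun_prop
  · intro n
    refine Filter.Eventually.of_forall fun θ _ => ?_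
    simp only [norm_mul, norm_div, norm_pow, Complex.norm_I, one_mul, Complex.norm_real,
      Complex.norm_natCast, Real.norm_eq_abs]
    have h1 : |Real.cos θ| ^ n ≤ 1 := pow_le_one₀ (abs_nonneg _) (Real.abs_cos_le_one θ)
    have h2 : 0 ≤ |x| ^ n / (n.factorial : ℝ) * |g θ| := by positivity
    nlinarith [mul_le_mul_of_nonneg_left h1 h2]
  · refine Filter.Eventually.of_forall fun θ _ => ?_
    exact (Real.summable_pow_div_factorial |x|).mul_left _
  · simp only [tsum_mul_left]
    apply Continuous.intervalIntegrable
    fun_prop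
  · refine Filter.Eventually.of_forall fun θ _ => ?_
    have h := (NormedSpace.expSeries_div_hasSum_exp (𝔸 := ℂ)
      (Complex.I * ((x * Real.cos θ : ℝ) : ℂ))).mul_left (g θ : ℂ)
    rw [← Complex.exp_eq_exp_ℂ] at h
    have e : (fun n : ℕ => (Complex.I * x) ^ n / (n.factorial : ℂ) *
        ((g θ * Real.cos θ ^ n : ℝ) : ℂ)) = fun n : ℕ => (g θ : ℂ) *
          ((Complex.I * ((x * Real.cos θ : ℝ) : ℂ)) ^ n / (n.factorial : ℂ)) := by
      funext n
      push_cast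
      ring
    rw [e]
    exact h

lemma aux_rec (n : ℕ) : (∫ θ in (0:ℝ)..(2 * Real.pi), Real.cos θ ^ (n + 2)) =
    (n + 1) / (n + 2) * ∫ θ in (0:ℝ)..(2 * Real.pi), Real.cos θ ^ n := by
  rw [integral_cos_pow]; simp

lemma aux_even (p : ℕ) : (∫ θ in (0:ℝ)..(2 * Real.pi), Real.cos θ ^ (2 * p)) =
    2 * Real.pi * ((2 * p).factorial / (4 ^ p * (p.factorial : ℝ) ^ 2)) := by
  induction p with
  | zero => simp
  | succ p ih =>
    rw [show 2 * (p + 1) = 2 * p + 2 by ring, aux_rec, ih]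
    simp only [Nat.factorial_succ]
    push_cast
    have : (p.factorial : ℝ) ≠ 0 := by positivity
    field_simp
    ring

lemma aux_odd (p : ℕ) : (∫ θ in (0:ℝ)..(2 * Real.pi), Real.cos θ ^ (2 * p + 1)) = 0 := by
  induction p with
  | zero => simp
  | succ p ih =>
    rw [show 2 * (p + 1) + 1 = (2 * p + 1) + 2 by ring, aux_rec, ih, mul_zero]

lemma aux_sin (n : ℕ) : (∫ θ in (0:ℝ)..(2 * Real.pi), Real.sin θ ^ 2 * Real.cos θ ^ n) =
    (1 / (n + 2)) * ∫ θ in (0:ℝ)..(2 * Real.pi), Real.cos θ ^ n := by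
  have : ∀ θ : ℝ, Real.sin θ ^ 2 * Real.cos θ ^ n = Real.cos θ ^ n - Real.cos θ ^ (n + 2) := by
    intro θ; rw [Real.sin_sq]; ring
  simp only [this]
  rw [intervalIntegral.integral_sub, aux_rec]
  · have : (n : ℝ) + 2 ≠ 0 := by positivity
    field_simp
    ring
  all_goals exact Continuous.intervalIntegrable (by fun_prop) _ _

lemma aux_reduce (g : ℝ → ℝ) (hg : Continuous g) (x : ℝ)
    (hodd : ∀ p : ℕ, (∫ θ in (0:ℝ)..(2 * Real.pi), g θ * Real.cos θ ^ (2 * p + 1)) = 0) :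
    (∫ θ in (0:ℝ)..(2 * Real.pi),
        (g θ : ℂ) * Complex.exp (Complex.I * ((x * Real.cos θ : ℝ) : ℂ))) =
    ((∑' p : ℕ, (-1) ^ p * x ^ (2 * p) / ((2 * p).factorial : ℝ) *
      (∫ θ in (0:ℝ)..(2 * Real.pi), g θ * Real.cos θ ^ (2 * p)) : ℝ) : ℂ) := by
  have h := aux_hasSum g hg x
  have inj : Function.Injective (fun p : ℕ => 2 * p) := fun a b h => by
    simpa using h
  rw [← inj.hasSum_iff] at h
  · rw [← h.tsum_eq, Complex.ofReal_tsum]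
    refine tsum_congr fun p => ?_
    simp only [Function.comp_apply]
    rw [mul_pow, pow_mul, Complex.I_sq]
    push_cast
    ring
  · intro n hn
    rcases Nat.even_or_odd' n with ⟨p, rfl | rfl⟩
    · exact absurd ⟨p, rfl⟩ hn
    · rw [hodd]; simp

lemma aux_J0 (x : ℝ) : (∫ θ in (0:ℝ)..(2 * Real.pi),
        Complex.exp (Complex.I * ((x * Real.cos θ : ℝ) : ℂ))) = ((2 * Real.pi * J0 x : ℝ) : ℂ) := by
  have h := aux_reduce (fun _ => 1) continuous_const x (by intro p; simpa using aux_odd p)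
  simp only [Complex.ofReal_one, one_mul] at h
  rw [h, J0, ← tsum_mul_left]
  congr 1
  refine tsum_congr fun p => ?_
  rw [aux_even, div_pow, pow_mul 2 2 p]
  have : (p.factorial : ℝ) ≠ 0 := by positivity
  have : ((2 * p).factorial : ℝ) ≠ 0 := by positivity
  norm_num
  field_simp

lemma aux_J1 (x : ℝ) (hx : x ≠ 0) : (∫ θ in (0:ℝ)..(2 * Real.pi),
        ((Real.sin θ ^ 2 : ℝ) : ℂ) * Complex.exp (Complex.I * ((x * Real.cos θ : ℝ) : ℂ))) =
      ((2 * Real.pi * (J1 x / x) : ℝ) : ℂ) := by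
  have h := aux_reduce (fun θ => Real.sin θ ^ 2) (by fun_prop) x
    (by intro p; rw [aux_sin, aux_odd, mul_zero])
  rw [h, J1, ← tsum_div_const, ← tsum_mul_left]
  congr 1
  refine tsum_congr fun p => ?_
  rw [aux_sin, aux_even, div_pow, pow_succ 2 (2 * p), pow_mul 2 2 p, Nat.factorial_succ p]
  have : (p.factorial : ℝ) ≠ 0 := by positivity
  have : ((2 * p).factorial : ℝ) ≠ 0 := by positivity
  push_cast
  norm_num
  field_simp
  ring

lemma aux_sc (x : ℝ) : (∫ θ in (0:ℝ)..(2 * Real.pi),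
        ((Real.sin θ * Real.cos θ : ℝ) : ℂ) *
          Complex.exp (Complex.I * ((x * Real.cos θ : ℝ) : ℂ))) = 0 := by
  have h := intervalIntegral.integral_comp_sub_left (a := 0) (b := 2 * Real.pi)
    (fun θ : ℝ => ((Real.sin θ * Real.cos θ : ℝ) : ℂ) *
          Complex.exp (Complex.I * ((x * Real.cos θ : ℝ) : ℂ))) (2 * Real.pi)
  simp only [Real.sin_two_pi_sub, Real.cos_two_pi_sub, sub_self, sub_zero, neg_mul,
    Complex.ofReal_neg, intervalIntegral.integral_neg] at h
  exact self_eq_neg.mp h.symm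

lemma aux_lin (x a b c : ℝ) (hx : x ≠ 0) : (∫ θ in (0:ℝ)..(2 * Real.pi),
        ((a + b * Real.sin θ ^ 2 + c * (Real.sin θ * Real.cos θ) : ℝ) : ℂ) *
          Complex.exp (Complex.I * ((x * Real.cos θ : ℝ) : ℂ))) =
      ((2 * Real.pi * (a * J0 x + b * (J1 x / x)) : ℝ) : ℂ) := by
  have e : ∀ θ : ℝ, ((a + b * Real.sin θ ^ 2 + c * (Real.sin θ * Real.cos θ) : ℝ) : ℂ) *
          Complex.exp (Complex.I * ((x * Real.cos θ : ℝ) : ℂ)) =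
      (a : ℂ) * Complex.exp (Complex.I * ((x * Real.cos θ : ℝ) : ℂ)) +
      (b : ℂ) * (((Real.sin θ ^ 2 : ℝ) : ℂ) *
        Complex.exp (Complex.I * ((x * Real.cos θ : ℝ) : ℂ))) +
      (c : ℂ) * (((Real.sin θ * Real.cos θ : ℝ) : ℂ) *
          Complex.exp (Complex.I * ((x * Real.cos θ : ℝ) : ℂ))) := by
    intro θ; push_cast; ring
  simp only [e]
  rw [intervalIntegral.integral_add, intervalIntegral.integral_add,
    intervalIntegral.integral_const_mul, intervalIntegral.integral_const_mul,
    intervalIntegral.integral_const_mul, aux_J0, aux_J1 x hx, aux_sc]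
  · push_cast; ring
  all_goals exact Continuous.intervalIntegrable (by fun_prop) _ _

lemma aux_nrm (r : Fin 2 → ℝ) (hr : r ≠ 0) : 0 < nrm r := by
  apply Real.sqrt_pos.mpr
  by_contra h
  apply hr
  have h0 : r 0 = 0 := by nlinarith [sq_nonneg (r 0), sq_nonneg (r 1)]
  have h1 : r 1 = 0 := by nlinarith [sq_nonneg (r 0), sq_nonneg (r 1)]
  ext i; fin_cases i <;> simp [h0, h1]

lemma aux_polar (r : Fin 2 → ℝ) : ∃ φ : ℝ, r 0 = nrm r * Real.cos φ ∧
    r 1 = nrm r * Real.sin φ := by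
  have hn : ‖(⟨r 0, r 1⟩ : ℂ)‖ = nrm r := by
    rw [Complex.norm_def, Complex.normSq_mk, nrm]; congr 1; ring
  refine ⟨Complex.arg ⟨r 0, r 1⟩, ?_, ?_⟩
  · rw [← hn, Complex.norm_mul_cos_arg]
  · rw [← hn, Complex.norm_mul_sin_arg]

lemma aux_main (k : ℝ) (hk : 0 < k) (r : Fin 2 → ℝ) (hr : r ≠ 0) (i j : Fin 2) (u v : ℝ) :
    (∫ θ in (0:ℝ)..(2 * Real.pi),
      ((u * (if i = j then 1 else 0) + v * (dir θ i * dir θ j) : ℝ) : ℂ) *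
        Complex.exp (Complex.I * ((k * (r 0 * Real.cos θ + r 1 * Real.sin θ) : ℝ) : ℂ))) =
    ((2 * Real.pi * (u * (if i = j then 1 else 0) * J0 (k * nrm r) +
      v * ((J1 (k * nrm r) / (k * nrm r)) * (if i = j then 1 else 0) +
        (J0 (k * nrm r) - 2 * (J1 (k * nrm r) / (k * nrm r))) *
          (r i / nrm r) * (r j / nrm r))) : ℝ) : ℂ) := by
  obtain ⟨φ, h0, h1⟩ := aux_polar r
  have hn := aux_nrm r hr
  have hx : k * nrm r ≠ 0 := by positivity
  set n := nrm r with hndef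
  have q0 : r 0 / n = Real.cos φ := by rw [h0]; field_simp
  have q1 : r 1 / n = Real.sin φ := by rw [h1]; field_simp
  set f : ℝ → ℂ := fun θ =>
      ((u * (if i = j then 1 else 0) + v * (dir θ i * dir θ j) : ℝ) : ℂ) *
        Complex.exp (Complex.I * ((k * (r 0 * Real.cos θ + r 1 * Real.sin θ) : ℝ) : ℂ)) with hf
  have per : Function.Periodic f (2 * Real.pi) := by
    intro θ
    simp only [hf, dir, Real.cos_add_two_pi, Real.sin_add_two_pi]
  have step : (∫ θ in (0:ℝ)..(2 * Real.pi), f θ) =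
      ∫ θ in (0:ℝ)..(2 * Real.pi), f (θ + φ) := by
    rw [intervalIntegral.integral_comp_add_right]
    have := per.intervalIntegral_add_eq 0 φ
    rw [zero_add] at this ⊢
    rw [this, add_comm]
  have arg : ∀ θ : ℝ, k * (r 0 * Real.cos (θ + φ) + r 1 * Real.sin (θ + φ)) =
      (k * n) * Real.cos θ := by
    intro θ
    rw [h0, h1, Real.cos_add, Real.sin_add]
    linear_combination (k * n * Real.cos θ) * Real.cos_sq_add_sin_sq φ
  rw [step]
  have fin : ∀ a b c : ℝ, (∀ θ : ℝ, u * (if i = j then 1 else 0) +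
      v * (dir (θ + φ) i * dir (θ + φ) j) =
        a + b * Real.sin θ ^ 2 + c * (Real.sin θ * Real.cos θ)) →
      (∫ θ in (0:ℝ)..(2 * Real.pi), f (θ + φ)) =
        ((2 * Real.pi * (a * J0 (k * n) + b * (J1 (k * n) / (k * n))) : ℝ) : ℂ) := by
    intro a b c h
    rw [← aux_lin (k * n) a b c hx]
    simp only [hf, h, arg]
  have cs := Real.cos_sq_add_sin_sq φ
  fin_cases i <;> fin_cases j
  · rw [fin (u + v * Real.cos φ ^ 2) (v * (Real.sin φ ^ 2 - Real.cos φ ^ 2))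
      (-2 * v * Real.cos φ * Real.sin φ)]
    · simp [q0]; rw [Complex.sin_sq]; ring
    · intro θ; simp [dir, Real.cos_add]
      linear_combination (v * Real.cos φ ^ 2) * Real.cos_sq_add_sin_sq θ
  · rw [fin (v * Real.cos φ * Real.sin φ) (-2 * v * (Real.cos φ * Real.sin φ))
      (v * (Real.cos φ ^ 2 - Real.sin φ ^ 2))]
    · simp [q0, q1]; ring
    · intro θ; simp [dir, Real.cos_add, Real.sin_add]
      linear_combination (v * Real.cos φ * Real.sin φ) * Real.cos_sq_add_sin_sq θ
  · rw [fin (v * Real.cos φ * Real.sin φ) (-2 * v * (Real.cos φ * Real.sin φ))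
      (v * (Real.cos φ ^ 2 - Real.sin φ ^ 2))]
    · simp [q0, q1]; ring
    · intro θ; simp [dir, Real.cos_add, Real.sin_add]
      linear_combination (v * Real.cos φ * Real.sin φ) * Real.cos_sq_add_sin_sq θ
  · rw [fin (u + v * Real.sin φ ^ 2) (v * (Real.cos φ ^ 2 - Real.sin φ ^ 2))
      (2 * v * Real.cos φ * Real.sin φ)]
    · simp [q1]; rw [Complex.cos_sq']; ring
    · intro θ; simp [dir, Real.sin_add]
      linear_combination (v * Real.sin φ ^ 2) * Real.cos_sq_add_sin_sq θ

/-- The imaginary part of the free-space Green's tensor of the 2D Navier equation: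
for Lamé constants `μ > 0`, `λ + μ ≥ 0`, frequency `ω > 0`, wavenumbers
`k_p = ω/√(λ+2μ)`, `k_s = ω/√μ`, and every nonzero `r ∈ ℝ²`,
`(1/(8π)) [ (1/(λ+2μ)) ∫₀^{2π} d⊗d e^{i k_p r·d} dθ + (1/μ) ∫₀^{2π} (I - d⊗d) e^{i k_s r·d} dθ ]
  = (1/(4μ)) [ F₁(|r|) I + F₂(|r|) r̂⊗r̂ ]`, stated entrywise. -/
theorem im_green_tensor_closed_form (ω μ lam : ℝ) (hω : 0 < ω) (hμ : 0 < μ)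
    (hlm : 0 ≤ lam + μ) (r : Fin 2 → ℝ) (hr : r ≠ 0) :
    ∀ i j : Fin 2,
      (1 / (8 * Real.pi) : ℂ) *
        ((1 / ((lam + 2 * μ : ℝ) : ℂ)) *
            (∫ θ in (0:ℝ)..(2 * Real.pi),
              ((dir θ i * dir θ j : ℝ) : ℂ) *
                Complex.exp (Complex.I *
                  (((ω / Real.sqrt (lam + 2 * μ)) *
                      (r 0 * Real.cos θ + r 1 * Real.sin θ) : ℝ) : ℂ))) +
          (1 / ((μ : ℝ) : ℂ)) *
            (∫ θ in (0:ℝ)..(2 * Real.pi),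
              (((if i = j then 1 else 0) - dir θ i * dir θ j : ℝ) : ℂ) *
                Complex.exp (Complex.I *
                  (((ω / Real.sqrt μ) *
                      (r 0 * Real.cos θ + r 1 * Real.sin θ) : ℝ) : ℂ)))) =
      ((1 / (4 * μ) *
          (F1 (ω / Real.sqrt (lam + 2 * μ)) (ω / Real.sqrt μ) (nrm r) *
              (if i = j then 1 else 0) +
            F2 (ω / Real.sqrt (lam + 2 * μ)) (ω / Real.sqrt μ) (nrm r) *
              (r i / nrm r) * (r j / nrm r)) : ℝ) : ℂ) := by
  intro i j
  have hl : 0 < lam + 2 * μ := by linarith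
  have hn := aux_nrm r hr
  have sl : Real.sqrt (lam + 2 * μ) ^ 2 = lam + 2 * μ := Real.sq_sqrt hl.le
  have sm : Real.sqrt μ ^ 2 = μ := Real.sq_sqrt hμ.le
  have pl := Real.sqrt_pos.mpr hl
  have pm := Real.sqrt_pos.mpr hμ
  have A := aux_main (ω / Real.sqrt (lam + 2 * μ)) (by positivity) r hr i j 0 1
  have B := aux_main (ω / Real.sqrt μ) (by positivity) r hr i j 1 (-1)
  simp only [zero_mul, one_mul, zero_add, neg_mul, ← sub_eq_add_neg] at A B
  rw [A, B, F1, F2]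
  generalize Real.sqrt (lam + 2 * μ) = a at *
  generalize Real.sqrt μ = b at *
  rw [← sl, ← sm]
  generalize (if i = j then (1:ℝ) else 0) = δ
  generalize J0 _ = X
  generalize J1 _ = Y
  generalize J0 _ = Z
  generalize J1 _ = W
  generalize nrm r = n at *
  have hpi := Real.pi_pos
  norm_cast
  field_simp
  ring
end
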